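/- Descent equations for derivatives of a gauge multiplet: let p : ℕ, let P : Fin p → R be a multiplet of polynomials, and let c be a finitely supported function from multi-indices to p×p real matrices such that d_q(P i) = ∑_{α, j} c(α)_{i j} · D_α(P j) for every i. Then for every k, all dual vectors v₁, …, v_k and every i: d_q(ρ(v₁)⋯ρ(v_k)(P i)) = ∑_{α, j} c(α)_{i j} · D_α(ρ(v₁)⋯ρ(v_k)(P j)) + ∑_{l=1}^{k} ∑_{α, j} c(α)_{i j} · (ρ(v₁)⋯ρ(∂_α v_l)⋯ρ(v_k))(P j) − ∑_{l=1}^{k} (ρ(v₁)⋯ρ(q·v_l)⋯ρ(v_k))(P i), where ∂_α v_l is the dual shift of v_l. -/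

import Mathlib

open MvPolynomial

/-- Spacetime multi-indices on 4-dimensional spacetime. -/
abbrev MIdx : Type := Fin 4 →₀ ℕ

/-- Jet coordinates `(A, α)` of `N` classical fields: `A` is a field index and
`α` a spacetime multi-index. -/
abbrev JetIdx (N : ℕ) : Type := Fin N × MIdx

/-- Jet vectors: finitely supported real-valued functions on the jet coordinates. -/
abbrev Jet (N : ℕ) : Type := JetIdx N →₀ ℝ

/-- Dual vectors. -/
abbrev Dual (N : ℕ) : Type := JetIdx N → ℝ

/-- The dual shift `(∂_α v)(A, β) := v (A, β + α)`. -/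
noncomputable def dShift {N : ℕ} (α : MIdx) (v : Dual N) : Dual N :=
  fun p => v (p.1, p.2 + α)

/-- The commutative algebra of Wick-monomial symbols in the jet variables. -/
abbrev R (N : ℕ) : Type := MvPolynomial (JetIdx N) ℝ

/-- The derivative operator `ρ(v)`: the unique `ℝ`-derivation of `R` with
`ρ(v)(X (A,α)) = v (A,α)` (as a constant polynomial). -/
noncomputable def rho {N : ℕ} (v : Dual N) : Derivation ℝ (R N) (R N) :=
  MvPolynomial.mkDerivation ℝ fun p => (C (v p) : R N)

/-- The total spacetime derivative `D_α`: the unique `ℝ`-derivation of `R` with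
`D_α (X (A,β)) = X (A, β+α)`. -/
noncomputable def Dop {N : ℕ} (α : MIdx) : Derivation ℝ (R N) (R N) :=
  MvPolynomial.mkDerivation ℝ fun p => (X (p.1, p.2 + α) : R N)

/-- BRST coefficient systems: finitely supported functions from multi-indices to
`N × N` real matrices. -/
abbrev QSys (N : ℕ) : Type := MIdx →₀ Matrix (Fin N) (Fin N) ℝ

/-- The BRST derivation `d_q`: the unique `ℝ`-derivation of `R` with
`d_q (X (A,γ)) = ∑_{β, B} (q β) A B • X (B, γ+β)`. -/
noncomputable def dQ {N : ℕ} (q : QSys N) : Derivation ℝ (R N) (R N) :=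
  MvPolynomial.mkDerivation ℝ fun p =>
    ∑ β ∈ q.support, ∑ B, (q β) p.1 B • (X (B, p.2 + β) : R N)

/-- The action of a BRST coefficient system on dual vectors:
`(q · v)(A, γ) := ∑_{β, B} (q β) A B * v (B, γ+β)`. -/
noncomputable def qDual {N : ℕ} (q : QSys N) (v : Dual N) : Dual N :=
  fun p => ∑ β ∈ q.support, ∑ B, (q β) p.1 B * v (B, p.2 + β)

/-- The composition `ρ(v₁) ∘ ⋯ ∘ ρ(v_k)` of derivative operators. -/
noncomputable def rhoChain {N : ℕ} {k : ℕ} (v : Fin k → Dual N) : R N →ₗ[ℝ] R N :=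
  (List.ofFn fun i => (rho (v i)).toLinearMap).foldr (· ∘ₗ ·) LinearMap.id

/-!
A commutator of derivations is a derivation, hence determined by its values on the jet variables;
this gives `[ρ(v), D_α] = ρ(∂_α v)` and `[ρ(v), d_q] = ρ(q · v)`. Since `[·, D]` obeys the Leibniz
rule on products of operators, moving `d_q` to the right through `ρ(v₁)⋯ρ(v_k)` and then each `D_α`
back to the left produces the two sums over `l`.
-/

theorem prod_ofFn_lie {A : Type*} [Ring A] {k : ℕ} (f : Fin k → A) (D : A) :
    ⁅(List.ofFn f).prod, D⁆ = ∑ l, (List.ofFn (Function.update f l ⁅f l, D⁆)).prod := by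
  induction k with
  | zero => simp [Ring.lie_def]
  | succ k ih =>
    have leibniz (a b : A) : ⁅a * b, D⁆ = ⁅a, D⁆ * b + a * ⁅b, D⁆ := by
      simp only [Ring.lie_def]
      noncomm_ring
    have update_succ_comp (l : Fin k) (a : A) :
        (fun i : Fin k => Function.update f l.succ a i.succ) =
          Function.update (fun i => f i.succ) l a :=
      Fin.tail_update_succ f l a
    simp [List.ofFn_succ, leibniz, ih, Fin.sum_univ_succ, Finset.mul_sum, update_succ_comp,
      Function.update_of_ne (Fin.succ_ne_zero _).symm]

section

variable {N : ℕ}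

theorem rho_lie_Dop (v : Dual N) (α : MIdx) : ⁅rho v, Dop α⁆ = rho (dShift α v) :=
  derivation_ext fun x => by
    simp [Derivation.commutator_apply, rho, Dop, dShift, mkDerivation_X]

theorem rho_lie_dQ (v : Dual N) (q : QSys N) : ⁅rho v, dQ q⁆ = rho (qDual q v) :=
  derivation_ext fun x => by
    simp [Derivation.commutator_apply, rho, dQ, qDual, mkDerivation_X, smul_eq_C_mul]

theorem rhoChain_eq_prod {k : ℕ} (v : Fin k → Dual N) :
    rhoChain v =
      (List.ofFn fun l => ((rho (v l)).toLinearMap : Module.End ℝ (R N))).prod :=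
  rfl

theorem rhoChain_apply_derivation {k : ℕ} {v w : Fin k → Dual N}
    {D : Derivation ℝ (R N) (R N)} (h : ∀ l, ⁅rho (v l), D⁆ = rho (w l)) (F : R N) :
    rhoChain v (D F) =
      D (rhoChain v F) + ∑ l, rhoChain (Function.update v l (w l)) F := by
  have commutator : ⁅(rhoChain v : Module.End ℝ (R N)), (D : Module.End ℝ (R N))⁆ =
      ∑ l, rhoChain (Function.update v l (w l)) := by
    simp only [rhoChain_eq_prod, prod_ofFn_lie, ← Derivation.commutator_coe_linear_map, h,
      Function.apply_update fun _ u => (rho u).toLinearMap]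
  rw [← sub_eq_iff_eq_add', ← LinearMap.sum_apply, ← commutator]
  rfl

theorem rhoChain_Dop {k : ℕ} (v : Fin k → Dual N) (α : MIdx) (F : R N) :
    rhoChain v (Dop α F) = Dop α (rhoChain v F) +
      ∑ l, rhoChain (Function.update v l (dShift α (v l))) F :=
  rhoChain_apply_derivation (fun l => rho_lie_Dop (v l) α) F

theorem rhoChain_dQ {k : ℕ} (v : Fin k → Dual N) (q : QSys N) (F : R N) :
    rhoChain v (dQ q F) = dQ q (rhoChain v F) +
      ∑ l, rhoChain (Function.update v l (qDual q (v l))) F :=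
  rhoChain_apply_derivation (fun l => rho_lie_dQ (v l) q) F

theorem descent_equations_general {q : QSys N} {F : R N} {s : Finset MIdx} {G : MIdx → R N}
    (hF : dQ q F = ∑ α ∈ s, Dop α (G α)) {k : ℕ} (v : Fin k → Dual N) :
    dQ q (rhoChain v F) =
      (∑ α ∈ s, Dop α (rhoChain v (G α)))
      + (∑ l, ∑ α ∈ s, rhoChain (Function.update v l (dShift α (v l))) (G α))
      - ∑ l, rhoChain (Function.update v l (qDual q (v l))) F := by
  rw [eq_sub_iff_add_eq, ← rhoChain_dQ, hF, map_sum, Finset.sum_comm, ← Finset.sum_add_distrib]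
  simp only [rhoChain_Dop]

end

/-- Descent equations for derivatives of a gauge multiplet. -/
theorem descent_equations (N : ℕ) (q : QSys N) (p : ℕ) (P : Fin p → R N)
    (c : MIdx →₀ Matrix (Fin p) (Fin p) ℝ)
    (hP : ∀ i, dQ q (P i) = ∑ α ∈ c.support, ∑ j, (c α) i j • Dop α (P j))
    (k : ℕ) (v : Fin k → Dual N) (i : Fin p) :
    dQ q (rhoChain v (P i)) =
      (∑ α ∈ c.support, ∑ j, (c α) i j • Dop α (rhoChain v (P j)))
      + (∑ l : Fin k, ∑ α ∈ c.support, ∑ j, (c α) i j •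
          rhoChain (Function.update v l (dShift α (v l))) (P j))
      - ∑ l : Fin k, rhoChain (Function.update v l (qDual q (v l))) (P i) := by
  have hPi : dQ q (P i) = ∑ α ∈ c.support, Dop α (∑ j, c α i j • P j) := by
    simp only [hP, map_sum, Derivation.map_smul]
  simpa only [map_sum, map_smul, Derivation.map_smul] using descent_equations_general hPi v
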